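/- Let (X,d_X,μ_X) and (Y,d_Y,μ_Y) be separable metric measure spaces with σ-finite Borel measures, each a Lipschitz differentiability space with systems of Lipschitz charts {(U_i, φ_i)}_{i∈ℕ} and {(V_j, ψ_j)}_{j∈ℕ} respectively. Fix charts (U_i, φ_i) and (V_j, ψ_j) and a Lipschitz function f : X × Y → ℝ. Then: (a) the set of (x₀,y₀) ∈ U_i × V_j at which the X-directional derivative D_X f(x₀,y₀) (with respect to φ_i) exists is a measurable subset of X × Y, and (x₀,y₀) ↦ D_X f(x₀,y₀) is measurable on this set, and likewise for D_Y f with respect to ψ_j; (b) for μ_X × μ_Y-a.e. (x₀,y₀) ∈ U_i × V_j, both D_X f(x₀,y₀) and D_Y f(x₀,y₀) exist. -/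

import Mathlib

open MeasureTheory Metric Filter Set
open scoped ENNReal NNReal

noncomputable section

/-- Dot product of two vectors in `ℝ^d`. -/
def dotp {d : ℕ} (v u : Fin d → ℝ) : ℝ := ∑ k, v k * u k

/-- `v` satisfies the first-order Taylor approximation property of `f` at `x` with respect
to the Lipschitz chart map `φ`. -/
def HasChartDerivAt {X : Type*} [MetricSpace X] {d : ℕ}
    (φ : X → Fin d → ℝ) (f : X → ℝ) (x : X) (v : Fin d → ℝ) : Prop :=
  Filter.Tendsto (fun y => (f y - f x - dotp v (fun k => φ y k - φ x k)) / dist y x)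
    (nhdsWithin x {x}ᶜ) (nhds 0)

/-!
Existence of a derivative with coefficients in a compact set `K` can be tested scale by scale:
if for each `n` some `v ∈ K` approximates `f` near `x` up to error `dist y x / (n + 1)`, a limit
point of these `v` is a derivative, because the coordinate map is Lipschitz. At a fixed scale the
set of good pairs (point, `v`) is closed, and projecting it along the compact `K` keeps it closed.
Hence the points having a derivative in a given closed set form a Borel set. Non-uniqueness means
that the zero function has a derivative on the unit sphere, so it is covered by the same
observation. The almost everywhere statement is then Fubini applied to the exceptional sets.
-/

open Asymptotics Topology

theorem abs_dotp_le {d : ℕ} (v u : Fin d → ℝ) : |dotp v u| ≤ d * (‖v‖ * ‖u‖) :=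
  calc |∑ k, v k * u k| ≤ ∑ k, |v k| * |u k| := by
        simpa only [abs_mul] using Finset.abs_sum_le_sum_abs (fun k => v k * u k) Finset.univ
    _ ≤ ∑ _k : Fin d, ‖v‖ * ‖u‖ := Finset.sum_le_sum fun k _ =>
        mul_le_mul (norm_le_pi_norm v k) (norm_le_pi_norm u k) (abs_nonneg _) (norm_nonneg _)
    _ = d * (‖v‖ * ‖u‖) := by simp

theorem dotp_sub_left {d : ℕ} (v w u : Fin d → ℝ) : dotp (v - w) u = dotp v u - dotp w u :=
  sub_dotProduct v w u

theorem dotp_smul_left {d : ℕ} (c : ℝ) (v u : Fin d → ℝ) : dotp (c • v) u = c * dotp v u :=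
  smul_dotProduct c v u

theorem isBigO_sub_dist_of_locallyLipschitz {X E : Type*} [PseudoMetricSpace X]
    [SeminormedAddCommGroup E] {φ : X → E} (hφ : LocallyLipschitz φ) (x : X) :
    (fun y => φ y - φ x) =O[𝓝 x] fun y => dist y x := by
  obtain ⟨L, t, ht, hL⟩ := hφ x
  refine IsBigO.of_bound L ?_
  filter_upwards [ht] with y hy
  rw [← dist_eq_norm, Real.norm_of_nonneg dist_nonneg]
  exact hL.dist_le_mul y hy x (mem_of_mem_nhds ht)

theorem ae_prod_iff_ae_ae_swap {α β : Type*} [MeasurableSpace α] [MeasurableSpace β]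
    {μ : Measure α} {ν : Measure β} [SFinite μ] [SFinite ν] {p : α × β → Prop}
    (hp : MeasurableSet {z | p z}) :
    (∀ᵐ z ∂μ.prod ν, p z) ↔ ∀ᵐ y ∂ν, ∀ᵐ x ∂μ, p (x, y) :=
  (Measure.ae_prod_iff_ae_ae hp).trans (Measure.ae_ae_comm (p := fun x y => p (x, y)) hp)

section ChartDerivative

variable {X : Type*} {d : ℕ} {φ : X → Fin d → ℝ} {f g : X → ℝ} {x : X} {v w : Fin d → ℝ}

/-- The error at `y` of the first-order Taylor approximation of `f` at `x` with coefficients `v`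
in the coordinates `φ`. -/
def chartRemainder (φ : X → Fin d → ℝ) (f : X → ℝ) (x : X) (v : Fin d → ℝ) (y : X) : ℝ :=
  f y - f x - dotp v (fun k => φ y k - φ x k)

theorem chartRemainder_self : chartRemainder φ f x v x = 0 := by
  simp [chartRemainder, dotp]

theorem chartRemainder_sub (y : X) :
    chartRemainder φ (f - g) x (v - w) y = chartRemainder φ f x v y - chartRemainder φ g x w y := by
  simp only [chartRemainder, dotp_sub_left, Pi.sub_apply]
  ring

theorem chartRemainder_smul (c : ℝ) (y : X) :
    chartRemainder φ (c • f) x (c • v) y = c * chartRemainder φ f x v y := by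
  simp only [chartRemainder, dotp_smul_left, Pi.smul_apply, smul_eq_mul]
  ring

theorem abs_chartRemainder_le_add (y : X) :
    |chartRemainder φ f x w y| ≤ |chartRemainder φ f x v y| + d * (‖v - w‖ * ‖φ y - φ x‖) := by
  have hdiff : chartRemainder φ f x w y =
      chartRemainder φ f x v y + dotp (v - w) (φ y - φ x) := by
    rw [dotp_sub_left]
    change f y - f x - dotp w (φ y - φ x) = f y - f x - dotp v (φ y - φ x) + _
    ring
  rw [hdiff]
  exact (abs_add_le _ _).trans (add_le_add_right (abs_dotp_le _ _) _)

variable [MetricSpace X]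

theorem hasChartDerivAt_iff_isLittleO :
    HasChartDerivAt φ f x v ↔ chartRemainder φ f x v =o[𝓝 x] fun y => dist y x := by
  have hinsert : insert x ({x}ᶜ : Set X) = univ := by simp [insert_eq]
  rw [← nhdsWithin_univ x, ← hinsert, isLittleO_insert chartRemainder_self,
    isLittleO_iff_tendsto fun y hy => by rw [dist_eq_zero.1 hy, chartRemainder_self]]
  rfl

theorem HasChartDerivAt.sub (hf : HasChartDerivAt φ f x v) (hg : HasChartDerivAt φ g x w) :
    HasChartDerivAt φ (f - g) x (v - w) := by
  rw [hasChartDerivAt_iff_isLittleO] at hf hg ⊢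
  exact (hf.sub hg).congr_left fun y => (chartRemainder_sub y).symm

theorem HasChartDerivAt.const_smul (c : ℝ) (hf : HasChartDerivAt φ f x v) :
    HasChartDerivAt φ (c • f) x (c • v) := by
  rw [hasChartDerivAt_iff_isLittleO] at hf ⊢
  exact (hf.const_mul_left c).congr_left fun y => (chartRemainder_smul c y).symm

theorem existsUnique_hasChartDerivAt_iff :
    (∃! v, HasChartDerivAt φ f x v) ↔
      (∃ v, HasChartDerivAt φ f x v) ∧ ¬∃ w ∈ sphere 0 1, HasChartDerivAt φ 0 x w := by
  constructor
  · rintro ⟨v, hv, hunique⟩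
    refine ⟨⟨v, hv⟩, fun ⟨w, hw, hw0⟩ => ?_⟩
    have hvw : v - w = v := hunique _ (by simpa only [sub_zero] using hv.sub hw0)
    exact ne_zero_of_mem_unit_sphere ⟨w, hw⟩ (sub_eq_self.1 hvw)
  · rintro ⟨⟨v, hv⟩, hnull⟩
    refine ⟨v, hv, fun w hw => ?_⟩
    by_contra hne
    have hdir : HasChartDerivAt φ 0 x (‖w - v‖⁻¹ • (w - v)) := by
      simpa only [sub_self, smul_zero] using (hw.sub hv).const_smul ‖w - v‖⁻¹
    exact hnull ⟨_, by simp [norm_smul, sub_ne_zero.2 hne], hdir⟩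

theorem exists_mem_hasChartDerivAt_iff_of_isCompact {K : Set (Fin d → ℝ)} (hK : IsCompact K)
    (hφ : (fun y => φ y - φ x) =O[𝓝 x] fun y => dist y x) :
    (∃ v ∈ K, HasChartDerivAt φ f x v) ↔ ∀ n : ℕ, ∃ v ∈ K,
      ∀ᶠ y in 𝓝 x, |chartRemainder φ f x v y| ≤ 1 / ((n : ℝ) + 1) * dist y x := by
  simp only [hasChartDerivAt_iff_isLittleO, isLittleO_iff, Real.norm_eq_abs, abs_dist]
  refine ⟨fun ⟨v, hvK, hv⟩ n => ⟨v, hvK, hv Nat.one_div_pos_of_nat⟩, fun h => ?_⟩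
  choose v hvK hv using h
  obtain ⟨w, hwK, s, hs, hlim⟩ := hK.tendsto_subseq hvK
  obtain ⟨L, hL⟩ := hφ.bound
  refine ⟨w, hwK, fun ε hε => ?_⟩
  have herror :
      Tendsto (fun m => 1 / ((s m : ℝ) + 1) + d * L * ‖v (s m) - w‖) atTop (𝓝 0) := by
    simpa using (tendsto_one_div_add_atTop_nhds_zero_nat.comp hs.tendsto_atTop).add
      ((tendsto_iff_norm_sub_tendsto_zero.1 hlim).const_mul (d * L))
  obtain ⟨m, hm⟩ := (herror.eventually_lt_const hε).exists
  filter_upwards [hv (s m), hL] with y hvy hLy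
  rw [Real.norm_of_nonneg dist_nonneg] at hLy
  calc |chartRemainder φ f x w y|
      ≤ |chartRemainder φ f x (v (s m)) y| + d * (‖v (s m) - w‖ * ‖φ y - φ x‖) :=
        abs_chartRemainder_le_add y
    _ ≤ 1 / ((s m : ℝ) + 1) * dist y x + d * (‖v (s m) - w‖ * (L * dist y x)) := by gcongr
    _ = (1 / ((s m : ℝ) + 1) + d * L * ‖v (s m) - w‖) * dist y x := by ring
    _ ≤ ε * dist y x := by gcongr

/-- The derivative `Df(x)` with respect to `φ`. It has the junk value `0` where `f` has no
derivative at `x` or more than one. -/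
def chartDeriv (φ : X → Fin d → ℝ) (f : X → ℝ) (x : X) : Fin d → ℝ :=
  open Classical in if h : ∃! v, HasChartDerivAt φ f x v then h.choose else 0

theorem hasChartDerivAt_chartDeriv (h : ∃! v, HasChartDerivAt φ f x v) :
    HasChartDerivAt φ f x (chartDeriv φ f x) := by
  rw [chartDeriv, dif_pos h]
  exact h.choose_spec.1

theorem chartDeriv_mem_iff {C : Set (Fin d → ℝ)} :
    chartDeriv φ f x ∈ C ↔
      ((∃! v, HasChartDerivAt φ f x v) ∧ ∃ v ∈ C, HasChartDerivAt φ f x v) ∨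
        ((¬∃! v, HasChartDerivAt φ f x v) ∧ 0 ∈ C) := by
  by_cases h : ∃! v, HasChartDerivAt φ f x v
  · have hspec := hasChartDerivAt_chartDeriv h
    simp only [h, true_and, not_true_eq_false, false_and, or_false]
    exact ⟨fun hC => ⟨_, hC, hspec⟩, fun ⟨v, hC, hv⟩ => h.unique hv hspec ▸ hC⟩
  · simp [chartDeriv, h]

end ChartDerivative

section Measurability

variable {X P : Type*} [MetricSpace X] [TopologicalSpace P] {d : ℕ} {φ : X → Fin d → ℝ}
  {π : P → X} {F : P → X → ℝ}

theorem isClosed_setOf_abs_chartRemainder_le (hφ : Continuous φ) (hπ : Continuous π)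
    (hF : ∀ y, Continuous fun p => F p y) (hFπ : Continuous fun p => F p (π p)) (ε δ : ℝ) :
    IsClosed {q : P × (Fin d → ℝ) | ∀ y ∈ ball (π q.1) δ,
      |chartRemainder φ (F q.1) (π q.1) q.2 y| ≤ ε * dist y (π q.1)} := by
  simp only [mem_ball, imp_iff_not_or, not_lt, ofPred_forall, ofPred_or]
  refine isClosed_iInter fun y => ?_
  have hdist : Continuous fun q : P × (Fin d → ℝ) => dist y (π q.1) := by fun_prop
  have hdotp : Continuous fun q : P × (Fin d → ℝ) =>
      dotp q.2 (fun k => φ y k - φ (π q.1) k) :=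
    continuous_snd.dotProduct (by fun_prop)
  have hremainder : Continuous fun q : P × (Fin d → ℝ) =>
      chartRemainder φ (F q.1) (π q.1) q.2 y :=
    (((hF y).sub hFπ).comp continuous_fst).sub hdotp
  exact (isClosed_le continuous_const hdist).union
    (isClosed_le hremainder.abs (hdist.const_mul ε))

variable [MeasurableSpace P] [OpensMeasurableSpace P]

theorem measurableSet_exists_mem_hasChartDerivAt_of_isCompact (hφ : LocallyLipschitz φ)
    (hπ : Continuous π) (hF : ∀ y, Continuous fun p => F p y)
    (hFπ : Continuous fun p => F p (π p)) {K : Set (Fin d → ℝ)} (hK : IsCompact K) :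
    MeasurableSet {p | ∃ v ∈ K, HasChartDerivAt φ (F p) (π p) v} := by
  have hscales (p : P) : (∃ v ∈ K, HasChartDerivAt φ (F p) (π p) v) ↔
      ∀ n : ℕ, ∃ k : ℕ, ∃ v ∈ K, ∀ y ∈ ball (π p) (1 / ((k : ℝ) + 1)),
        |chartRemainder φ (F p) (π p) v y| ≤ 1 / ((n : ℝ) + 1) * dist y (π p) := by
    rw [exists_mem_hasChartDerivAt_iff_of_isCompact hK
      (isBigO_sub_dist_of_locallyLipschitz hφ (π p))]
    simp only [nhds_basis_ball_inv_nat_succ.eventually_iff, true_and]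
    exact forall_congr' fun n => ⟨fun ⟨v, hv, k, h⟩ => ⟨k, v, hv, h⟩,
      fun ⟨k, v, hv, h⟩ => ⟨v, hv, k, h⟩⟩
  simp only [hscales, ofPred_forall, ofPred_exists]
  refine MeasurableSet.iInter fun n => MeasurableSet.iUnion fun k => IsClosed.measurableSet ?_
  have : CompactSpace K := isCompact_iff_compactSpace.1 hK
  have hclosed := isClosedMap_fst_of_compactSpace (X := P) (Y := K) _
    ((isClosed_setOf_abs_chartRemainder_le hφ.continuous hπ hF hFπ (1 / ((n : ℝ) + 1))
      (1 / ((k : ℝ) + 1))).preimage (continuous_id.prodMap continuous_subtype_val))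
  convert hclosed using 1
  ext p
  simp

theorem measurableSet_exists_mem_hasChartDerivAt (hφ : LocallyLipschitz φ)
    (hπ : Continuous π) (hF : ∀ y, Continuous fun p => F p y)
    (hFπ : Continuous fun p => F p (π p)) {C : Set (Fin d → ℝ)} (hC : IsClosed C) :
    MeasurableSet {p | ∃ v ∈ C, HasChartDerivAt φ (F p) (π p) v} := by
  have hexhaust : {p | ∃ v ∈ C, HasChartDerivAt φ (F p) (π p) v} =
      ⋃ n : ℕ, {p | ∃ v ∈ C ∩ closedBall 0 n, HasChartDerivAt φ (F p) (π p) v} := by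
    ext p
    simp only [mem_ofPred_eq, mem_iUnion, mem_inter_iff, mem_closedBall_zero_iff]
    refine ⟨fun ⟨v, hvC, hv⟩ => ?_, fun ⟨_, v, ⟨hvC, _⟩, hv⟩ => ⟨v, hvC, hv⟩⟩
    obtain ⟨n, hn⟩ := exists_nat_ge ‖v‖
    exact ⟨n, v, ⟨hvC, hn⟩, hv⟩
  rw [hexhaust]
  exact MeasurableSet.iUnion fun n => measurableSet_exists_mem_hasChartDerivAt_of_isCompact
    hφ hπ hF hFπ ((isCompact_closedBall 0 (n : ℝ)).inter_left hC)

theorem measurableSet_existsUnique_hasChartDerivAt (hφ : LocallyLipschitz φ)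
    (hπ : Continuous π) (hF : ∀ y, Continuous fun p => F p y)
    (hFπ : Continuous fun p => F p (π p)) :
    MeasurableSet {p | ∃! v, HasChartDerivAt φ (F p) (π p) v} := by
  simp only [existsUnique_hasChartDerivAt_iff]
  have hexists := measurableSet_exists_mem_hasChartDerivAt hφ hπ hF hFπ isClosed_univ
  have hnull := measurableSet_exists_mem_hasChartDerivAt hφ hπ (F := 0) (C := sphere 0 1)
    (fun _ => continuous_const) continuous_const isClosed_sphere
  simp only [mem_univ, true_and] at hexists
  exact hexists.inter hnull.compl

theorem measurable_chartDeriv (hφ : LocallyLipschitz φ) (hπ : Continuous π)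
    (hF : ∀ y, Continuous fun p => F p y) (hFπ : Continuous fun p => F p (π p)) :
    Measurable fun p => chartDeriv φ (F p) (π p) := by
  refine measurable_of_isClosed fun C hC => ?_
  simp only [preimage, chartDeriv_mem_iff]
  have hunique := measurableSet_existsUnique_hasChartDerivAt hφ hπ hF hFπ
  exact (hunique.inter (measurableSet_exists_mem_hasChartDerivAt hφ hπ hF hFπ hC)).union
    (hunique.compl.inter (MeasurableSet.const _))

end Measurability

/-- `(U, φ)` is a chart of a Lipschitz differentiability space: a measurable set with a Lipschitz
coordinate map with respect to which every Lipschitz function has a unique derivative at almost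
every point of `U`. -/
structure IsLipschitzDifferentiabilityChart {X : Type*} [MetricSpace X] [MeasurableSpace X]
    (μ : Measure X) (U : Set X) {d : ℕ} (φ : X → Fin d → ℝ) : Prop where
  measurableSet : MeasurableSet U
  lipschitz : ∃ K : ℝ≥0, LipschitzWith K φ
  ae_existsUnique : ∀ g : X → ℝ, (∃ K : ℝ≥0, LipschitzWith K g) →
    ∀ᵐ x ∂(μ.restrict U), ∃! v, HasChartDerivAt φ g x v

theorem IsLipschitzDifferentiabilityChart.locallyLipschitz {X : Type*} [MetricSpace X]
    [MeasurableSpace X] {μ : Measure X} {U : Set X} {d : ℕ} {φ : X → Fin d → ℝ}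
    (h : IsLipschitzDifferentiabilityChart μ U φ) : LocallyLipschitz φ :=
  h.lipschitz.elim fun _ hK => hK.locallyLipschitz

theorem statement8_general {X Y : Type*}
    [MetricSpace X] [MeasurableSpace X] [OpensMeasurableSpace X]
    [MetricSpace Y] [MeasurableSpace Y] [OpensMeasurableSpace Y] [SecondCountableTopologyEither X Y]
    {μX : Measure X} {μY : Measure Y} [SFinite μX] [SFinite μY]
    {m n : ℕ} {U : Set X} {φ : X → Fin m → ℝ} (hU : IsLipschitzDifferentiabilityChart μX U φ)
    {V : Set Y} {ψ : Y → Fin n → ℝ} (hV : IsLipschitzDifferentiabilityChart μY V ψ)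
    {f : X × Y → ℝ} (hf : Continuous f)
    (hfX : ∀ y, ∃ K : ℝ≥0, LipschitzWith K fun x => f (x, y))
    (hfY : ∀ x, ∃ K : ℝ≥0, LipschitzWith K fun y => f (x, y)) :
    (MeasurableSet {p : X × Y | p ∈ U ×ˢ V ∧
        ∃! v, HasChartDerivAt φ (fun x => f (x, p.2)) p.1 v} ∧
      ∃ gX : X × Y → Fin m → ℝ, Measurable gX ∧
        ∀ p : X × Y, p ∈ U ×ˢ V →
          (∃! v, HasChartDerivAt φ (fun x => f (x, p.2)) p.1 v) →
          HasChartDerivAt φ (fun x => f (x, p.2)) p.1 (gX p)) ∧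
    (MeasurableSet {p : X × Y | p ∈ U ×ˢ V ∧
        ∃! w, HasChartDerivAt ψ (fun y => f (p.1, y)) p.2 w} ∧
      ∃ gY : X × Y → Fin n → ℝ, Measurable gY ∧
        ∀ p : X × Y, p ∈ U ×ˢ V →
          (∃! w, HasChartDerivAt ψ (fun y => f (p.1, y)) p.2 w) →
          HasChartDerivAt ψ (fun y => f (p.1, y)) p.2 (gY p)) ∧
    (∀ᵐ p ∂((μX.prod μY).restrict (U ×ˢ V)),
      (∃! v, HasChartDerivAt φ (fun x => f (x, p.2)) p.1 v) ∧
      (∃! w, HasChartDerivAt ψ (fun y => f (p.1, y)) p.2 w)) := by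
  have hUV : MeasurableSet (U ×ˢ V) := hU.measurableSet.prod hV.measurableSet
  have hfX_cont (x : X) : Continuous fun p : X × Y => f (x, p.2) := by fun_prop
  have hfY_cont (y : Y) : Continuous fun p : X × Y => f (p.1, y) := by fun_prop
  have hEX := measurableSet_existsUnique_hasChartDerivAt (F := fun p x => f (x, p.2))
    hU.locallyLipschitz continuous_fst hfX_cont hf
  have hEY := measurableSet_existsUnique_hasChartDerivAt (F := fun p y => f (p.1, y))
    hV.locallyLipschitz continuous_snd hfY_cont hf
  have hgX := measurable_chartDeriv (F := fun p x => f (x, p.2))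
    hU.locallyLipschitz continuous_fst hfX_cont hf
  have hgY := measurable_chartDeriv (F := fun p y => f (p.1, y))
    hV.locallyLipschitz continuous_snd hfY_cont hf
  refine ⟨⟨hUV.inter hEX, _, hgX, fun _ _ => hasChartDerivAt_chartDeriv⟩,
    ⟨hUV.inter hEY, _, hgY, fun _ _ => hasChartDerivAt_chartDeriv⟩, ?_⟩
  rw [← Measure.prod_restrict]
  refine Eventually.and ?_ ?_
  · rw [ae_prod_iff_ae_ae_swap hEX]
    exact Eventually.of_forall fun y => hU.ae_existsUnique (fun x => f (x, y)) (hfX y)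
  · rw [Measure.ae_prod_iff_ae_ae hEY]
    exact Eventually.of_forall fun x => hV.ae_existsUnique (fun y => f (x, y)) (hfY x)

/-- Lemma 3.8 of the paper: for fixed charts `(U i, φ i)` on `X` and `(V j, ψ j)` on `Y`
and Lipschitz `f : X × Y → ℝ`, the sets where the directional derivatives `D_X f` and
`D_Y f` exist (uniquely) are measurable, these derivatives are measurable functions on
those sets, and both exist at `μ_X × μ_Y`-a.e. point of `U i × V j`. -/
theorem statement8 {X Y : Type*}
    [MetricSpace X] [MeasurableSpace X] [BorelSpace X] [TopologicalSpace.SeparableSpace X]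
    [MetricSpace Y] [MeasurableSpace Y] [BorelSpace Y] [TopologicalSpace.SeparableSpace Y]
    (μX : Measure X) (μY : Measure Y) [SigmaFinite μX] [SigmaFinite μY]
    (m : ℕ → ℕ) (U : ℕ → Set X) (hU : ∀ i, MeasurableSet (U i))
    (φ : ∀ i, X → Fin (m i) → ℝ) (hφ : ∀ i, ∃ K : ℝ≥0, LipschitzWith K (φ i))
    (hcovX : μX ((⋃ i, U i)ᶜ) = 0)
    (hLDSX : ∀ g : X → ℝ, (∃ K : ℝ≥0, LipschitzWith K g) → ∀ i,
      ∀ᵐ x ∂(μX.restrict (U i)), ∃! v, HasChartDerivAt (φ i) g x v)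
    (n : ℕ → ℕ) (V : ℕ → Set Y) (hV : ∀ j, MeasurableSet (V j))
    (ψ : ∀ j, Y → Fin (n j) → ℝ) (hψ : ∀ j, ∃ K : ℝ≥0, LipschitzWith K (ψ j))
    (hcovY : μY ((⋃ j, V j)ᶜ) = 0)
    (hLDSY : ∀ g : Y → ℝ, (∃ K : ℝ≥0, LipschitzWith K g) → ∀ j,
      ∀ᵐ y ∂(μY.restrict (V j)), ∃! w, HasChartDerivAt (ψ j) g y w)
    (i j : ℕ) (f : X × Y → ℝ) (hf : ∃ K : ℝ≥0, LipschitzWith K f) :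
    (MeasurableSet {p : X × Y | p ∈ (U i) ×ˢ (V j) ∧
        ∃! v, HasChartDerivAt (φ i) (fun x => f (x, p.2)) p.1 v} ∧
      ∃ gX : X × Y → Fin (m i) → ℝ, Measurable gX ∧
        ∀ p : X × Y, p ∈ (U i) ×ˢ (V j) →
          (∃! v, HasChartDerivAt (φ i) (fun x => f (x, p.2)) p.1 v) →
          HasChartDerivAt (φ i) (fun x => f (x, p.2)) p.1 (gX p)) ∧
    (MeasurableSet {p : X × Y | p ∈ (U i) ×ˢ (V j) ∧
        ∃! w, HasChartDerivAt (ψ j) (fun y => f (p.1, y)) p.2 w} ∧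
      ∃ gY : X × Y → Fin (n j) → ℝ, Measurable gY ∧
        ∀ p : X × Y, p ∈ (U i) ×ˢ (V j) →
          (∃! w, HasChartDerivAt (ψ j) (fun y => f (p.1, y)) p.2 w) →
          HasChartDerivAt (ψ j) (fun y => f (p.1, y)) p.2 (gY p)) ∧
    (∀ᵐ p ∂((μX.prod μY).restrict ((U i) ×ˢ (V j))),
      (∃! v, HasChartDerivAt (φ i) (fun x => f (x, p.2)) p.1 v) ∧
      (∃! w, HasChartDerivAt (ψ j) (fun y => f (p.1, y)) p.2 w)) := by
  have : SecondCountableTopology X := UniformSpace.secondCountable_of_separable X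
  obtain ⟨K, hf⟩ := hf
  exact statement8_general ⟨hU i, hφ i, fun g hg => hLDSX g hg i⟩
    ⟨hV j, hψ j, fun g hg => hLDSY g hg j⟩ hf.continuous
    (fun y => ⟨_, hf.comp (.prodMk_right y)⟩) fun x => ⟨_, hf.comp (.prodMk_left x)⟩
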